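/- arXiv:2509.09900 — 2 statements merged into one kernel-verified Lean document; each statement's English description precedes it below -/
import Mathlib

section
/- Let $a, b$ be positive real numbers and let $t, k$ be integers with $1 \le t \le k-1$. Then $\left(\frac{a}{t}\right)^{2t} \left(\frac{b}{k-t}\right)^{k-t} \le \left(\frac{a}{k} + \sqrt{\frac{b}{k}}\right)^{2k}$. -/
/-!
Put `r = k - t` and apply AM–GM to `2 * t` copies of `a / t` and `2 * r` copies of `√(b / r)`:
the product of these `2 * k` factors is the left-hand side, and their mean is
`a / k + √(r * b) / k`, where `√(r * b) / k ≤ √(b / k)` because `r ≤ k`.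
-/

theorem prod_pow_le_arith_mean_pow {ι : Type*} (s : Finset ι) (n : ι → ℕ) {z : ι → ℝ}
    (hz : ∀ i ∈ s, 0 ≤ z i) :
    ∏ i ∈ s, z i ^ n i ≤ ((∑ i ∈ s, n i * z i) / ∑ i ∈ s, (n i : ℝ)) ^ ∑ i ∈ s, n i := by
  rcases Nat.eq_zero_or_pos (∑ i ∈ s, n i) with hn | hn
  · -- The mean on the right is the junk value `0 / 0`, but its exponent is `0`.
    have hzero : ∀ i ∈ s, n i = 0 := Finset.sum_eq_zero_iff.mp hn
    rw [hn, pow_zero, Finset.prod_eq_one fun i hi => by rw [hzero i hi, pow_zero]]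
  · have hprod : 0 ≤ ∏ i ∈ s, z i ^ n i :=
      Finset.prod_nonneg fun i hi => pow_nonneg (hz i hi) _
    have hmean : (∏ i ∈ s, z i ^ n i) ^ ((∑ i ∈ s, n i : ℕ) : ℝ)⁻¹ ≤
        (∑ i ∈ s, n i * z i) / ∑ i ∈ s, (n i : ℝ) := by
      simpa only [Real.rpow_natCast, Nat.cast_sum] using
        Real.geom_mean_le_arith_mean s (fun i => (n i : ℝ)) z (fun i _ => (n i).cast_nonneg)
          (by exact_mod_cast hn) hz
    rw [← Real.rpow_inv_natCast_pow hprod hn.ne']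
    exact pow_le_pow_left₀ (Real.rpow_nonneg hprod _) hmean _

theorem pow_mul_pow_le_arith_mean2_pow {x y : ℝ} (hx : 0 ≤ x) (hy : 0 ≤ y) (m n : ℕ) :
    x ^ m * y ^ n ≤ ((m * x + n * y) / (m + n)) ^ (m + n) := by
  simpa [Fin.sum_univ_two, Fin.prod_univ_two] using
    prod_pow_le_arith_mean_pow Finset.univ ![m, n] (z := ![x, y])
      (by simp [Fin.forall_fin_two, hx, hy])

theorem div_mul_sqrt_div_le_sqrt_div (b : ℝ) {r k : ℝ} (hr : 0 ≤ r) (hrk : r ≤ k) :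
    r / k * √(b / r) ≤ √(b / k) := by
  have hk : 0 ≤ k := hr.trans hrk
  calc r / k * √(b / r) = √b * (r / √r) / k := by rw [Real.sqrt_div' b hr]; ring
    _ = √b * √r / k := by rw [Real.div_sqrt]
    _ ≤ √b * √k / k := by gcongr
    _ = √(b / k) := by
        rw [Real.sqrt_div' b hk, mul_div_assoc, Real.sqrt_div_self', mul_one_div]

theorem stmt_3 (a b : ℝ) (ha : 0 < a) (hb : 0 < b) (t k : ℕ)
    (ht : 1 ≤ t) (htk : t ≤ k - 1) :
    (a / (t : ℝ)) ^ (2 * t) * (b / ((k - t : ℕ) : ℝ)) ^ (k - t) ≤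
      (a / (k : ℝ) + Real.sqrt (b / (k : ℝ))) ^ (2 * k) := by
  obtain ⟨r, rfl⟩ : ∃ r, k = t + r := Nat.exists_eq_add_of_le (by lia)
  rw [Nat.add_sub_cancel_left, Nat.cast_add]
  have ht0 : (0 : ℝ) < t := by exact_mod_cast ht
  have hmean : ((2 * t : ℕ) * (a / t) + (2 * r : ℕ) * √(b / r)) / ((2 * t : ℕ) + (2 * r : ℕ)) =
      a / (t + r) + r / (t + r) * √(b / r) := by
    push_cast
    field_simp
  calc (a / t) ^ (2 * t) * (b / r) ^ r
      = (a / t) ^ (2 * t) * √(b / r) ^ (2 * r) := by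
        rw [pow_mul √(b / r), Real.sq_sqrt (by positivity)]
    _ ≤ (a / (t + r) + r / (t + r) * √(b / r)) ^ (2 * (t + r)) := by
        rw [← hmean, mul_add]
        exact pow_mul_pow_le_arith_mean2_pow (by positivity) (Real.sqrt_nonneg _) _ _
    _ ≤ (a / (t + r) + √(b / (t + r))) ^ (2 * (t + r)) := by
        gcongr
        exact div_mul_sqrt_div_le_sqrt_div b r.cast_nonneg (by linarith)
end

section
/- Let $q$, $c$, $k$ be positive integers with $k \le q$ and $k \le c$, and let $t$ be an integer with $0 \le t \le k$. Then $\binom{q}{t}^2 \binom{c}{k-t} \le e^{2k} \left(\frac{q}{k} + \sqrt{\frac{c}{k}}\right)^{2k}$, where $e$ is Euler's number. -/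
/-!
Write `s = k - t`. Since `s! ≤ k ^ s`, we have
`c.choose s ≤ c ^ s / s! ≤ (√(c * k) ^ s / s!) ^ 2`, so the left-hand side is at most the square of
`q ^ t / t! * (√(c * k) ^ s / s!)`. This product is a single term of the binomial expansion of
`(q + √(c * k)) ^ k / k!`, and `k ^ k / k! ≤ exp k` together with `√(c * k) / k = √(c / k)` gives
the bound.
-/

open scoped Nat

theorem pow_mul_pow_mul_choose_le_add_pow {R : Type*} [CommSemiring R] [PartialOrder R]
    [IsOrderedRing R] {a b : R} (ha : 0 ≤ a) (hb : 0 ≤ b) (m n : ℕ) :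
    a ^ m * b ^ n * (m + n).choose m ≤ (a + b) ^ (m + n) := by
  rw [add_pow]
  simpa only [Nat.add_sub_cancel_left] using
    Finset.single_le_sum (f := fun i ↦ a ^ i * b ^ (m + n - i) * ((m + n).choose i : R))
      (fun _ _ ↦ by positivity) (Finset.mem_range_succ_iff.2 (Nat.le_add_right m n))

theorem pow_div_factorial_mul_pow_div_factorial_le {K : Type*} [Semifield K] [LinearOrder K]
    [IsStrictOrderedRing K] {a b : K} (ha : 0 ≤ a) (hb : 0 ≤ b) (m n : ℕ) :
    a ^ m / m ! * (b ^ n / n !) ≤ (a + b) ^ (m + n) / (m + n)! := by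
  calc a ^ m / m ! * (b ^ n / n !)
      = a ^ m * b ^ n * (m + n).choose m / (m + n)! := by
        rw [Nat.cast_add_choose]
        field_simp
    _ ≤ (a + b) ^ (m + n) / (m + n)! := by
        gcongr
        exact pow_mul_pow_mul_choose_le_add_pow ha hb m n

theorem pow_div_factorial_le_exp_one_mul_div_pow {x : ℝ} (hx : 0 ≤ x) (n : ℕ) :
    x ^ n / n ! ≤ (Real.exp 1 * (x / n)) ^ n := by
  rcases eq_or_ne n 0 with rfl | hn
  · simp
  calc x ^ n / n ! = (n : ℝ) ^ n / n ! * (x / n) ^ n := by rw [div_pow]; field_simp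
    _ ≤ Real.exp n * (x / n) ^ n := by
        gcongr
        exact Real.pow_div_factorial_le_exp n n.cast_nonneg n
    _ = (Real.exp 1 * (x / n)) ^ n := by rw [mul_pow, Real.exp_one_pow]

theorem choose_le_sq_sqrt_mul_pow_div_factorial (c : ℕ) {s k : ℕ} (hsk : s ≤ k) :
    (c.choose s : ℝ) ≤ (√(c * k) ^ s / s !) ^ 2 := by
  have factorial_le : (s ! : ℝ) ≤ (k : ℝ) ^ s := by
    exact_mod_cast s.factorial_le_pow.trans (Nat.pow_le_pow_left hsk s)
  calc (c.choose s : ℝ) ≤ (c : ℝ) ^ s / s ! := Nat.choose_le_pow_div s c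
    _ = (c : ℝ) ^ s * s ! / (s ! : ℝ) ^ 2 := by field_simp
    _ ≤ (c : ℝ) ^ s * (k : ℝ) ^ s / (s ! : ℝ) ^ 2 := by gcongr
    _ = (√(c * k) ^ s / s !) ^ 2 := by
        rw [div_pow, pow_right_comm, Real.sq_sqrt (by positivity), mul_pow]

theorem choose_sq_mul_choose_le_sq_pow_div_factorial (q c : ℕ) {k t : ℕ} (htk : t ≤ k) :
    (q.choose t : ℝ) ^ 2 * c.choose (k - t) ≤ ((q + √(c * k)) ^ k / k !) ^ 2 := by
  calc (q.choose t : ℝ) ^ 2 * c.choose (k - t)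
      ≤ ((q : ℝ) ^ t / t !) ^ 2 * (√(c * k) ^ (k - t) / (k - t)!) ^ 2 := by
        gcongr
        · exact Nat.choose_le_pow_div t q
        · exact choose_le_sq_sqrt_mul_pow_div_factorial c (k.sub_le t)
    _ = ((q : ℝ) ^ t / t ! * (√(c * k) ^ (k - t) / (k - t)!)) ^ 2 := (mul_pow _ _ 2).symm
    _ ≤ ((q + √(c * k)) ^ k / k !) ^ 2 := by
        gcongr
        simpa only [Nat.add_sub_cancel' htk] using
          pow_div_factorial_mul_pow_div_factorial_le (q.cast_nonneg (α := ℝ))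
            (Real.sqrt_nonneg (c * k)) t (k - t)

theorem stmt_4_general (q c : ℕ) {k t : ℕ} (htk : t ≤ k) :
    (((q.choose t) ^ 2 * c.choose (k - t) : ℕ) : ℝ) ≤
      Real.exp 1 ^ (2 * k) * ((q : ℝ) / (k : ℝ) + Real.sqrt ((c : ℝ) / (k : ℝ))) ^ (2 * k) := by
  have base_eq : (q + √(c * k)) / k = q / k + √((c : ℝ) / k) := by
    rw [add_div, Real.sqrt_mul c.cast_nonneg, mul_div_assoc, Real.sqrt_div_self,
      Real.sqrt_div c.cast_nonneg, ← div_eq_mul_inv]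
  push_cast
  calc (q.choose t : ℝ) ^ 2 * c.choose (k - t)
      ≤ ((q + √(c * k)) ^ k / k !) ^ 2 := choose_sq_mul_choose_le_sq_pow_div_factorial q c htk
    _ ≤ ((Real.exp 1 * ((q + √(c * k)) / k)) ^ k) ^ 2 := by
        gcongr
        exact pow_div_factorial_le_exp_one_mul_div_pow (by positivity) k
    _ = Real.exp 1 ^ (2 * k) * (q / k + √((c : ℝ) / k)) ^ (2 * k) := by
        rw [base_eq, ← pow_mul', mul_pow]

theorem stmt_4 (q c k t : ℕ) (hq : 0 < q) (hc : 0 < c) (hk : 0 < k)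
    (hkq : k ≤ q) (hkc : k ≤ c) (htk : t ≤ k) :
    (((q.choose t) ^ 2 * c.choose (k - t) : ℕ) : ℝ) ≤
      Real.exp 1 ^ (2 * k) * ((q : ℝ) / (k : ℝ) + Real.sqrt ((c : ℝ) / (k : ℝ))) ^ (2 * k) :=
  stmt_4_general q c htk
end
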